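/- Let D > 0, let F : [0, D) → ℝ be C³ with F(0) = 0, F'(0) = 0, and F'(t), F''(t), F'''(t), and (F(t)/t)' all nonnegative on (0, D), and let r : ℂ² → ℝ be convex and Fréchet-differentiable. Define ρ(z) = F(x₁²) + r(z) for z = (z₁,z₂) with z₁ = x₁ + i y₁ and x₁² < D, and fix d with d² < D. Write ζ₁ = ξ₁ + i η₁ and z₁ = x₁ + i y₁. Then for each k ∈ {1, 2} there is a constant c > 0 such that: for all ζ, z ∈ ℂ² with |ξ₁| ≤ d, |x₁| ≤ d, ρ(ζ) − ρ(z) ≥ 0, and |ξ₁| ≥ |x₁ − ξ₁|, one has |Φ(ζ,z)|^k · |z − ζ| ≥ c·( |Im Φ(ζ,z)| + ρ(ζ) − ρ(z) + F(|x₁ − ξ₁|²) )^k · ( |x₁ − ξ₁| + |y₁ − η₁| ). -/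

import Mathlib

open Complex Set

/-- The Wirtinger derivative `∂g/∂z₁` of a real-valued function `g` on `ℂ²`. -/
noncomputable def wirt1 (g : ℂ × ℂ → ℝ) (ζ : ℂ × ℂ) : ℂ :=
  (1 / 2 : ℂ) * (((fderiv ℝ g ζ) (1, 0) : ℝ) - Complex.I * ((fderiv ℝ g ζ) (Complex.I, 0) : ℝ))

/-- The Wirtinger derivative `∂g/∂z₂`. -/
noncomputable def wirt2 (g : ℂ × ℂ → ℝ) (ζ : ℂ × ℂ) : ℂ :=
  (1 / 2 : ℂ) * (((fderiv ℝ g ζ) (0, 1) : ℝ) - Complex.I * ((fderiv ℝ g ζ) (0, Complex.I) : ℝ))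

/-- The support function `Φ(ζ,z) = Σ_{j=1}^{2} (∂g/∂ζ_j)(ζ)·(ζ_j − z_j)`. -/
noncomputable def suppFn (g : ℂ × ℂ → ℝ) (ζ z : ℂ × ℂ) : ℂ :=
  wirt1 g ζ * (ζ.1 - z.1) + wirt2 g ζ * (ζ.2 - z.2)

/-- The Euclidean norm on `ℂ²`. -/
noncomputable def eNorm (w : ℂ × ℂ) : ℝ :=
  Real.sqrt (‖w.1‖ ^ 2 + ‖w.2‖ ^ 2)

/-!
Twice the real part of `Φ(ζ, z)` is the real differential of `ρ` at `ζ` applied to `ζ - z`. For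
the convex summand `r` this is at least `r ζ - r z`. For `F(x₁²)`, write `h = x₁ - ξ₁` and
`x₁² = ξ₁² + 2 ξ₁ h + h²`: the tangent line of `F` at `ξ₁²` leaves the surplus `F'(ξ₁²) h²`, which
dominates `F(h²)` because `h² ≤ ξ₁²` and `F 0 = 0`. Hence `2 Re Φ ≥ ρ ζ - ρ z + F(h²)`, so the
bracket in the estimate is at most `3 |Φ|`; the remaining factor is at most `2 |z - ζ|`.
-/

section Convex

variable {E : Type*} [NormedAddCommGroup E] [NormedSpace ℝ E]

lemma add_apply_sub_le_of_convexOn_of_hasFDerivWithinAt {s : Set E} {f : E → ℝ}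
    {f' : E →L[ℝ] ℝ} {x y : E}
    (hf : ConvexOn ℝ s f) (hx : x ∈ s) (hy : y ∈ s) (hf' : HasFDerivWithinAt f f' s x) :
    f x + f' (y - x) ≤ f y := by
  let γ : ℝ →ᵃ[ℝ] E := AffineMap.lineMap x y
  have hγ0 : γ 0 = x := AffineMap.lineMap_apply_zero x y
  have hγ1 : γ 1 = y := AffineMap.lineMap_apply_one x y
  have hderiv : HasDerivWithinAt (f ∘ γ) (f' (y - x)) (γ ⁻¹' s) 0 :=
    hf'.comp_hasDerivWithinAt_of_eq 0 AffineMap.hasDerivWithinAt_lineMap (mapsTo_preimage γ s)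
      hγ0.symm
  have hslope : f' (y - x) ≤ slope (f ∘ γ) 0 1 :=
    (hf.comp_affineMap γ).le_slope_of_hasDerivWithinAt (by simpa [hγ0]) (by simpa [hγ1])
      zero_lt_one hderiv
  simp only [slope_def_field, Function.comp_apply, hγ0, hγ1, sub_zero, div_one] at hslope
  linarith

lemma add_mul_sub_le_of_convexOn_of_hasDerivWithinAt {s : Set ℝ} {f : ℝ → ℝ} {f' x y : ℝ}
    (hf : ConvexOn ℝ s f) (hx : x ∈ s) (hy : y ∈ s) (hf' : HasDerivWithinAt f f' s x) :
    f x + f' * (y - x) ≤ f y := by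
  simpa [mul_comm] using
    add_apply_sub_le_of_convexOn_of_hasFDerivWithinAt hf hx hy hf'.hasFDerivWithinAt

lemma sub_le_mul_sub_of_convexOn_of_hasDerivWithinAt {s : Set ℝ} {f : ℝ → ℝ} {f' x y z : ℝ}
    (hf : ConvexOn ℝ s f) (hx : x ∈ s) (hz : z ∈ s) (hxy : x ≤ y) (hyz : y ≤ z)
    (hf' : HasDerivWithinAt f f' s z) : f y - f x ≤ f' * (y - x) := by
  rcases hxy.eq_or_lt with rfl | hxy
  · simp
  have hy : y ∈ s := hf.1.ordConnected.out hx hz ⟨hxy.le, hyz⟩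
  have hslope : slope f x y ≤ f' :=
    (hf.slope_mono hx ⟨hy, hxy.ne'⟩ ⟨hz, (hxy.trans_le hyz).ne'⟩ hyz).trans
      (hf.slope_le_of_hasDerivWithinAt hx hz (hxy.trans_le hyz) hf')
  rwa [slope_def_field, div_le_iff₀ (sub_pos.2 hxy)] at hslope

lemma convexOn_of_forall_mem_hasDerivWithinAt2_nonneg {s : Set ℝ} {f f' f'' : ℝ → ℝ}
    (hs : Convex ℝ s) (hf' : ∀ x ∈ s, HasDerivWithinAt f (f' x) s x)
    (hf'' : ∀ x ∈ s, HasDerivWithinAt f' (f'' x) s x)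
    (hf''_nonneg : ∀ x ∈ interior s, 0 ≤ f'' x) : ConvexOn ℝ s f :=
  convexOn_of_hasDerivWithinAt2_nonneg hs (fun x hx ↦ (hf' x hx).continuousWithinAt)
    (fun x hx ↦ (hf' x (interior_subset hx)).mono interior_subset)
    (fun x hx ↦ (hf'' x (interior_subset hx)).mono interior_subset) hf''_nonneg

lemma sq_tangent_add_le_of_convexOn {s : Set ℝ} {f : ℝ → ℝ} {f' a b : ℝ}
    (hf : ConvexOn ℝ s f) (h0 : 0 ∈ s) (ha : a ^ 2 ∈ s) (hb : b ^ 2 ∈ s) (hab : |b - a| ≤ |a|)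
    (hf' : HasDerivWithinAt f f' s (a ^ 2)) :
    f (a ^ 2) + f' * (2 * a * (b - a)) + (f ((b - a) ^ 2) - f 0) ≤ f (b ^ 2) := by
  have htangent : f (a ^ 2) + f' * (b ^ 2 - a ^ 2) ≤ f (b ^ 2) :=
    add_mul_sub_le_of_convexOn_of_hasDerivWithinAt hf ha hb hf'
  have hsurplus : f ((b - a) ^ 2) - f 0 ≤ f' * ((b - a) ^ 2 - 0) :=
    sub_le_mul_sub_of_convexOn_of_hasDerivWithinAt hf h0 ha (sq_nonneg _) (sq_le_sq.2 hab) hf'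
  linarith

lemma hasFDerivAt_comp_sq {f : ℝ → ℝ} {f' : ℝ} {L : E →L[ℝ] ℝ} {x : E}
    (hf : HasDerivWithinAt f f' (Ici 0) (L x ^ 2)) :
    HasFDerivAt (fun y ↦ f (L y ^ 2)) ((f' * (2 * L x)) • L) x := by
  have hsq : HasFDerivAt (fun y ↦ L y ^ 2) ((2 * L x) • L) x := by
    simpa using L.hasFDerivAt.pow 2
  have hmaps : ∀ᶠ y in nhds x, L y ^ 2 ∈ Ici 0 := .of_forall fun y ↦ sq_nonneg (L y)
  simpa only [smul_smul, Function.comp_def] using hf.comp_hasFDerivAt x hsq hmaps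

end Convex

lemma two_mul_re_suppFn (g : ℂ × ℂ → ℝ) (ζ z : ℂ × ℂ) :
    2 * (suppFn g ζ z).re = fderiv ℝ g ζ (ζ - z) := by
  have hbasis (w : ℂ × ℂ) : w = w.1.re • ((1 : ℂ), (0 : ℂ)) + w.1.im • (I, (0 : ℂ))
      + w.2.re • ((0 : ℂ), (1 : ℂ)) + w.2.im • ((0 : ℂ), I) := by
    ext <;> simp
  rw [hbasis (ζ - z)]
  simp only [map_add, map_smul, smul_eq_mul]
  simp only [suppFn, wirt1, wirt2, one_div, add_re, mul_re, inv_re, re_ofNat, normSq_ofNat,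
    div_self_mul_self', sub_re, ofReal_re, I_re, zero_mul, I_im, ofReal_im, mul_zero, sub_self,
    sub_zero, inv_im, im_ofNat, neg_zero, zero_div, sub_im, mul_im, one_mul, zero_add, zero_sub,
    mul_neg, add_zero, neg_mul, sub_neg_eq_add, Prod.fst_sub, Prod.snd_sub]
  ring

lemma abs_im_add_le_three_mul_norm {w : ℂ} {t : ℝ} (h : t ≤ 2 * w.re) :
    |w.im| + t ≤ 3 * ‖w‖ := by
  linarith [abs_im_le_norm w, re_le_norm w]

lemma abs_re_add_abs_im_le_two_mul_eNorm (w : ℂ × ℂ) :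
    |w.1.re| + |w.1.im| ≤ 2 * eNorm w := by
  have hnorm : ‖w.1‖ ≤ eNorm w :=
    Real.le_sqrt_of_sq_le (le_add_of_nonneg_right (sq_nonneg _))
  linarith [abs_re_le_norm w.1, abs_im_le_norm w.1]

section SupportFunction

variable {D : ℝ} {F : ℝ → ℝ} {Ω : Set (ℂ × ℂ)} {r ρ : ℂ × ℂ → ℝ} {ζ z : ℂ × ℂ}

lemma fderiv_apply_of_eq_comp_re_sq_add {F' : ℝ}
    (hF : HasDerivWithinAt F F' (Ico 0 D) (ζ.1.re ^ 2)) (hr : DifferentiableAt ℝ r ζ)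
    (hΩ : Ω ∈ nhds ζ) (hρ : ∀ w ∈ Ω, w.1.re ^ 2 < D → ρ w = F (w.1.re ^ 2) + r w)
    (hζD : ζ.1.re ^ 2 < D) (v : ℂ × ℂ) :
    fderiv ℝ ρ ζ v = F' * (2 * ζ.1.re * v.1.re) + fderiv ℝ r ζ v := by
  have hF_Ici : HasDerivWithinAt F F' (Ici 0) (ζ.1.re ^ 2) := by
    rwa [← Ici_inter_Iio, hasDerivWithinAt_inter (Iio_mem_nhds hζD)] at hF
  have hstrip : {w : ℂ × ℂ | w.1.re ^ 2 < D} ∈ nhds ζ :=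
    (isOpen_lt (by fun_prop) continuous_const).mem_nhds hζD
  have hρ_near : ρ =ᶠ[nhds ζ] fun w ↦ F (w.1.re ^ 2) + r w := by
    filter_upwards [hΩ, hstrip] with w hwΩ hwD using hρ w hwΩ hwD
  have hderiv := (hasFDerivAt_comp_sq (L := reCLM.comp (.fst ℝ ℂ ℂ)) hF_Ici).add hr.hasFDerivAt
  rw [(hderiv.congr_of_eventuallyEq hρ_near).fderiv]
  simp [mul_assoc]

lemma sub_add_le_two_mul_re_suppFn
    (hFconv : ConvexOn ℝ (Ico 0 D) F) (hFdiff : DifferentiableOn ℝ F (Ico 0 D)) (hF0 : F 0 = 0)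
    (hΩ : IsOpen Ω) (hrconv : ConvexOn ℝ Ω r) (hrdiff : DifferentiableOn ℝ r Ω)
    (hρ : ∀ w ∈ Ω, w.1.re ^ 2 < D → ρ w = F (w.1.re ^ 2) + r w)
    (hζ : ζ ∈ Ω) (hz : z ∈ Ω) (hζD : ζ.1.re ^ 2 < D) (hzD : z.1.re ^ 2 < D)
    (hle : |z.1.re - ζ.1.re| ≤ |ζ.1.re|) :
    ρ ζ - ρ z + F (|z.1.re - ζ.1.re| ^ 2) ≤ 2 * (suppFn ρ ζ z).re := by
  have hζI : ζ.1.re ^ 2 ∈ Ico 0 D := ⟨sq_nonneg _, hζD⟩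
  have hF' := (hFdiff _ hζI).hasDerivWithinAt
  have hr := (hrdiff ζ hζ).differentiableAt (hΩ.mem_nhds hζ)
  have hF_gap := sq_tangent_add_le_of_convexOn hFconv ⟨le_rfl, (sq_nonneg _).trans_lt hζD⟩ hζI
    ⟨sq_nonneg _, hzD⟩ hle hF'
  have hr_gap := add_apply_sub_le_of_convexOn_of_hasFDerivWithinAt hrconv hζ hz
    hr.hasFDerivAt.hasFDerivWithinAt
  rw [← neg_sub ζ z, map_neg] at hr_gap
  rw [two_mul_re_suppFn, fderiv_apply_of_eq_comp_re_sq_add hF' hr (hΩ.mem_nhds hζ) hρ hζD,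
    hρ ζ hζ hζD, hρ z hz hzD, sq_abs, Prod.fst_sub, sub_re]
  linarith

theorem stmt7_general
    (hFconv : ConvexOn ℝ (Ico 0 D) F) (hFdiff : DifferentiableOn ℝ F (Ico 0 D)) (hF0 : F 0 = 0)
    (hFnonneg : ∀ t ∈ Ico 0 D, 0 ≤ F t)
    (hΩ : IsOpen Ω) (hrconv : ConvexOn ℝ Ω r) (hrdiff : DifferentiableOn ℝ r Ω)
    (hρ : ∀ w ∈ Ω, w.1.re ^ 2 < D → ρ w = F (w.1.re ^ 2) + r w)
    (hζ : ζ ∈ Ω) (hz : z ∈ Ω) (hζD : ζ.1.re ^ 2 < D) (hzD : z.1.re ^ 2 < D)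
    (hpos : 0 ≤ ρ ζ - ρ z) (hle : |z.1.re - ζ.1.re| ≤ |ζ.1.re|) (k : ℕ) :
    1 / (2 * 3 ^ k) * (|(suppFn ρ ζ z).im| + ρ ζ - ρ z + F (|z.1.re - ζ.1.re| ^ 2)) ^ k *
        (|z.1.re - ζ.1.re| + |z.1.im - ζ.1.im|) ≤
      ‖suppFn ρ ζ z‖ ^ k * eNorm (z - ζ) := by
  set B := |(suppFn ρ ζ z).im| + ρ ζ - ρ z + F (|z.1.re - ζ.1.re| ^ 2)
  have hB_nonneg : 0 ≤ B := by
    have hF := hFnonneg (|z.1.re - ζ.1.re| ^ 2)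
      ⟨sq_nonneg _, (sq_le_sq.2 (by rwa [abs_abs])).trans_lt hζD⟩
    linarith [abs_nonneg (suppFn ρ ζ z).im]
  have hB_le : B ≤ 3 * ‖suppFn ρ ζ z‖ := by
    linarith [abs_im_add_le_three_mul_norm (sub_add_le_two_mul_re_suppFn hFconv hFdiff hF0 hΩ
      hrconv hrdiff hρ hζ hz hζD hzD hle)]
  calc 1 / (2 * 3 ^ k) * B ^ k * (|z.1.re - ζ.1.re| + |z.1.im - ζ.1.im|)
      ≤ 1 / (2 * 3 ^ k) * (3 * ‖suppFn ρ ζ z‖) ^ k * (2 * eNorm (z - ζ)) := by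
        gcongr
        simpa using abs_re_add_abs_im_le_two_mul_eNorm (z - ζ)
    _ = ‖suppFn ρ ζ z‖ ^ k * eNorm (z - ζ) := by
        rw [mul_pow]
        field_simp

end SupportFunction

/-- Lemma 2.3, first case: lower bound for the support function of
`ρ(z) = F(x₁²) + r(z)` (real case) when `|ξ₁| ≥ |x₁ − ξ₁|`. -/
theorem stmt7 (D : ℝ) (hD : 0 < D) (F F' F'' F''' : ℝ → ℝ)
    (hF : ContDiffOn ℝ 3 F (Set.Ico 0 D))
    (hF' : ∀ t ∈ Set.Ico 0 D, HasDerivWithinAt F (F' t) (Set.Ico 0 D) t)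
    (hF'' : ∀ t ∈ Set.Ico 0 D, HasDerivWithinAt F' (F'' t) (Set.Ico 0 D) t)
    (hF''' : ∀ t ∈ Set.Ico 0 D, HasDerivWithinAt F'' (F''' t) (Set.Ico 0 D) t)
    (hF0 : F 0 = 0) (hF'0 : F' 0 = 0)
    (hF'pos : ∀ t ∈ Set.Ioo 0 D, 0 ≤ F' t)
    (hF''pos : ∀ t ∈ Set.Ioo 0 D, 0 ≤ F'' t)
    (hF'''pos : ∀ t ∈ Set.Ioo 0 D, 0 ≤ F''' t)
    (hquot : ∀ t ∈ Set.Ioo 0 D, 0 ≤ deriv (fun s => F s / s) t)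
    (r : ℂ × ℂ → ℝ) (hconv : ConvexOn ℝ Set.univ r) (hdiff : Differentiable ℝ r)
    (ρ : ℂ × ℂ → ℝ)
    (hρ : ∀ z : ℂ × ℂ, (z.1.re) ^ 2 < D → ρ z = F ((z.1.re) ^ 2) + r z)
    (d : ℝ) (hd : d ^ 2 < D) (k : ℕ) (hk : k = 1 ∨ k = 2) :
    ∃ c > (0 : ℝ), ∀ ζ z : ℂ × ℂ,
      |ζ.1.re| ≤ d → |z.1.re| ≤ d → 0 ≤ ρ ζ - ρ z →
      |z.1.re - ζ.1.re| ≤ |ζ.1.re| →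
      ‖suppFn ρ ζ z‖ ^ k * eNorm (z - ζ) ≥
        c * (|(suppFn ρ ζ z).im| + ρ ζ - ρ z + F (|z.1.re - ζ.1.re| ^ 2)) ^ k *
          (|z.1.re - ζ.1.re| + |z.1.im - ζ.1.im|) := by
  have hFconv : ConvexOn ℝ (Ico 0 D) F := convexOn_of_forall_mem_hasDerivWithinAt2_nonneg
    (convex_Ico 0 D) hF' hF'' (by rwa [interior_Ico])
  have hFnonneg (t : ℝ) (ht : t ∈ Ico 0 D) : 0 ≤ F t := by
    simpa [hF0, hF'0] using add_mul_sub_le_of_convexOn_of_hasDerivWithinAt hFconv ⟨le_rfl, hD⟩ ht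
      (hF' 0 ⟨le_rfl, hD⟩)
  have hsq {x : ℝ} (hx : |x| ≤ d) : x ^ 2 < D :=
    (sq_le_sq.2 (hx.trans (le_abs_self d))).trans_lt hd
  exact ⟨1 / (2 * 3 ^ k), by positivity, fun ζ z hζ hz hpos hle ↦
    stmt7_general hFconv (fun t ht ↦ (hF' t ht).differentiableWithinAt) hF0 hFnonneg isOpen_univ
      hconv hdiff.differentiableOn (fun w _ ↦ hρ w) (mem_univ ζ) (mem_univ z) (hsq hζ) (hsq hz)
      hpos hle k⟩
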